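/- Suppose ψ ∈ C⁰([0,1]) with ψ(0) < 0 and ψ(1) < 0 is symmetric, i.e. ψ(x) = ψ(1−x) for all x ∈ (0,1). Let u₀ ∈ W^{3,∞}(0,1) ∩ H satisfy u₀''(0) = u₀''(1) = 0 and u₀(x) = u₀(1−x) for all x ∈ (0,1), and let (u(t))_{t≥0} be an Obstacle Gradient Flow for the elastic energy starting at u₀. Then u(t)(1−x) = u(t)(x) for all t ≥ 0 and all x ∈ (0,1), i.e. the flow preserves symmetry. -/

import Mathlib

open MeasureTheory Set Filter Topology

noncomputable section

/-- Membership in `H = W^{2,2}(0,1) ∩ W₀^{1,2}(0,1)`: `u1` is the (continuous) derivative of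
`u` on `[0,1]`, `u1` is absolutely continuous with (integrable) derivative `u2 ∈ L²(0,1)`,
and `u(0) = u(1) = 0`. -/
def MemH (u u1 u2 : ℝ → ℝ) : Prop :=
  (∀ x ∈ Icc (0:ℝ) 1, HasDerivWithinAt u (u1 x) (Icc 0 1) x) ∧
  (∀ x ∈ Icc (0:ℝ) 1, u1 x = u1 0 + ∫ t in (0:ℝ)..x, u2 t) ∧
  IntegrableOn u2 (Icc (0:ℝ) 1) ∧
  IntegrableOn (fun x => (u2 x) ^ 2) (Icc (0:ℝ) 1) ∧
  u 0 = 0 ∧ u 1 = 0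

/-- Membership in the obstacle set `C = { u ∈ H : u ≥ ψ a.e. }`. -/
def MemC (ψ : ℝ → ℝ) (u u1 u2 : ℝ → ℝ) : Prop :=
  MemH u u1 u2 ∧ ∀ᵐ x ∂(volume.restrict (Icc (0:ℝ) 1)), ψ x ≤ u x

/-- The inner product of `H`: `(u,v) = ∫₀¹ u'' v''` (in terms of the second derivatives). -/
def Hip (u2 v2 : ℝ → ℝ) : ℝ := ∫ x in (0:ℝ)..1, u2 x * v2 x

/-- The norm of `H`: `‖u‖ = (∫₀¹ (u'')²)^{1/2}` (in terms of the second derivative). -/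
def Hnorm (u2 : ℝ → ℝ) : ℝ := Real.sqrt (∫ x in (0:ℝ)..1, (u2 x) ^ 2)

/-- The elastic (Willmore / Euler) bending energy `E(u) = ∫₀¹ u''²/(1+u'²)^{5/2}`. -/
def elE (u1 u2 : ℝ → ℝ) : ℝ :=
  ∫ x in (0:ℝ)..1, (u2 x) ^ 2 / (1 + (u1 x) ^ 2) ^ ((5:ℝ)/2)

/-- The gradient pairing of the elastic energy:
`(∇E(u), φ) = 2∫₀¹ u''φ''/(1+u'²)^{5/2} - 5∫₀¹ u''²u'φ'/(1+u'²)^{7/2}`. -/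
def elDE (u1 u2 φ1 φ2 : ℝ → ℝ) : ℝ :=
  2 * (∫ x in (0:ℝ)..1, u2 x * φ2 x / (1 + (u1 x) ^ 2) ^ ((5:ℝ)/2))
  - 5 * (∫ x in (0:ℝ)..1, (u2 x) ^ 2 * u1 x * φ1 x / (1 + (u1 x) ^ 2) ^ ((7:ℝ)/2))

/-- An Obstacle Gradient Flow for the elastic energy on
`H = W^{2,2}(0,1) ∩ W₀^{1,2}(0,1)` with obstacle set `C = {u ∈ H : u ≥ ψ a.e.}`:
the curve `t ↦ u(t)` (with space derivatives `u1, u2`) starts at `u₀`, stays in `C`,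
is locally `W^{1,2}` in time with values in `H` and a.e. time derivative `v(t) ∈ H`
(with space derivatives `v1, v2`), and satisfies the flow variational inequality
`(u̇(t), w - u(t)) + (∇E(u(t)), w - u(t)) ≥ 0` for all `w ∈ C`, for a.e. `t > 0`. -/
structure IsOGFel (ψ : ℝ → ℝ) (u u1 u2 v v1 v2 : ℝ → ℝ → ℝ)
    (u₀ u₀1 u₀2 : ℝ → ℝ) : Prop where
  init : ∀ x, u 0 x = u₀ x
  init1 : ∀ x ∈ Icc (0:ℝ) 1, u1 0 x = u₀1 x
  init2 : ∀ x ∈ Icc (0:ℝ) 1, u2 0 x = u₀2 x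
  memC : ∀ t : ℝ, 0 ≤ t → MemC ψ (u t) (u1 t) (u2 t)
  vMemH : ∀ᵐ t ∂(volume.restrict (Ioi (0:ℝ))), MemH (v t) (v1 t) (v2 t)
  derivAe : ∀ᵐ t ∂(volume.restrict (Ioi (0:ℝ))),
    Filter.Tendsto (fun h : ℝ => Hnorm (fun x => (u2 (t + h) x - u2 t x) / h - v2 t x))
      (nhdsWithin (0:ℝ) {(0:ℝ)}ᶜ) (nhds 0)
  ftc : ∀ s t : ℝ, 0 ≤ s → s ≤ t → ∀ x ∈ Icc (0:ℝ) 1,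
    u t x - u s x = ∫ r in s..t, v r x
  sqInt : ∀ T : ℝ, 0 < T →
    IntegrableOn (fun t => ∫ x in (0:ℝ)..1, (v2 t x) ^ 2) (Ioc 0 T)
  fvi : ∀ᵐ t ∂(volume.restrict (Ioi (0:ℝ))), ∀ w w1 w2 : ℝ → ℝ, MemC ψ w w1 w2 →
    0 ≤ Hip (v2 t) (fun x => w2 x - u2 t x)
        + elDE (u1 t) (u2 t) (fun x => w1 x - u1 t x) (fun x => w2 x - u2 t x)

/-!
The map `u ↦ u''` identifies `H` isometrically with `L²(0,1)`, its inverse being integration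
against the Green function of the second derivative. In this picture an obstacle gradient flow is
an absolutely continuous curve in a Hilbert space. The functions `p ↦ (1 + p²)^(-5/2)` and
`p ↦ p (1 + p²)^(-7/2)` are bounded and Lipschitz, and `|u'|` is bounded by the norm of `u` in `H`;
hence `-∇E` is one-sided Lipschitz on bounded subsets of `H`. Testing the variational inequality of
each of two flows with the other flow therefore gives `d/dt ‖u - w‖² ≤ C ‖u - w‖²` on bounded time
intervals, so by Grönwall's inequality a flow is determined by its obstacle and its initial datum.
Reflection at `1/2` preserves the inner product of `H` and the energy, so the reflection of the
flow is a flow with the same obstacle and initial datum, and the two coincide.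
-/

/-! ### Absolute continuity and Grönwall's inequality -/

section AbsolutelyContinuous

variable {X Y E : Type*} [PseudoMetricSpace X] [PseudoMetricSpace Y] [NormedAddCommGroup E]
  {a b : ℝ}

lemma absolutelyContinuousOnInterval_of_dist_le {f : ℝ → X} {g : ℝ → Y}
    (hg : AbsolutelyContinuousOnInterval g a b)
    (h : ∀ p ∈ uIcc a b, ∀ q ∈ uIcc a b, dist (f p) (f q) ≤ dist (g p) (g q)) :
    AbsolutelyContinuousOnInterval f a b := by
  rw [AbsolutelyContinuousOnInterval] at hg ⊢
  refine squeeze_zero' (Eventually.of_forall fun I ↦ Finset.sum_nonneg fun i _ ↦ dist_nonneg)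
    ?_ hg
  filter_upwards [mem_inf_of_right (mem_principal_self _)] with I hI
  exact Finset.sum_le_sum fun i hi ↦ h _ (hI.1 i hi).1 _ (hI.1 i hi).2

lemma absolutelyContinuousOnInterval_norm {f : ℝ → E}
    (hf : AbsolutelyContinuousOnInterval f a b) :
    AbsolutelyContinuousOnInterval (fun t ↦ ‖f t‖) a b :=
  absolutelyContinuousOnInterval_of_dist_le hf fun _ _ _ _ ↦
    (dist_norm_norm_le _ _).trans_eq (dist_eq_norm _ _).symm

lemma le_of_absolutelyContinuousOnInterval_of_deriv_nonpos {f : ℝ → ℝ} (hab : a ≤ b)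
    (hf : AbsolutelyContinuousOnInterval f a b)
    (h : ∀ᵐ t, t ∈ Ioo a b → deriv f t ≤ 0) : f b ≤ f a := by
  rw [← sub_nonpos, ← hf.integral_deriv_eq_sub, intervalIntegral.integral_of_le hab,
    integral_Ioc_eq_integral_Ioo]
  exact integral_nonpos_of_ae ((ae_restrict_iff' measurableSet_Ioo).2 h)

variable [NormedSpace ℝ E]

lemma absolutelyContinuousOnInterval_of_sub_eq_integral {D W : ℝ → E}
    (hW : IntervalIntegrable W volume a b)
    (hD : ∀ t ∈ uIcc a b, D t - D a = ∫ r in a..t, W r) :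
    AbsolutelyContinuousOnInterval D a b := by
  refine absolutelyContinuousOnInterval_of_dist_le
    (hW.norm.absolutelyContinuousOnInterval_intervalIntegral left_mem_uIcc) fun p hp q hq ↦ ?_
  have hint {t : ℝ} (ht : t ∈ uIcc a b) : IntervalIntegrable W volume a t :=
    hW.mono_set (uIcc_subset_uIcc_left ht)
  rw [dist_eq_norm, dist_eq_norm, ← sub_sub_sub_cancel_right (D p) (D q) (D a), hD p hp, hD q hq,
    intervalIntegral.integral_interval_sub_left (hint hp) (hint hq),
    intervalIntegral.integral_interval_sub_left (hint hp).norm (hint hq).norm]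
  exact intervalIntegral.norm_integral_le_abs_integral_norm

lemma ae_hasDerivAt_of_sub_eq_integral [CompleteSpace E] {D W : ℝ → E}
    (hW : IntervalIntegrable W volume a b)
    (hD : ∀ t ∈ uIcc a b, D t - D a = ∫ r in a..t, W r) :
    ∀ᵐ t, t ∈ Ioo a b → HasDerivAt D (W t) t := by
  filter_upwards [hW.ae_hasDerivAt_integral] with t ht hmem
  have hder := (ht (Ioo_subset_Icc_self.trans Icc_subset_uIcc hmem) a left_mem_uIcc).const_add (D a)
  refine hder.congr_of_eventuallyEq ?_
  filter_upwards [Ioo_mem_nhds hmem.1 hmem.2] with s hs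
  rw [← hD s (Ioo_subset_Icc_self.trans Icc_subset_uIcc hs), add_sub_cancel]

end AbsolutelyContinuous

lemma norm_sq_le_exp_mul_norm_sq_of_inner_le {E : Type*} [NormedAddCommGroup E]
    [InnerProductSpace ℝ E] [CompleteSpace E] {a b C : ℝ} {D W : ℝ → E} (hab : a ≤ b)
    (hW : IntervalIntegrable W volume a b)
    (hD : ∀ t ∈ uIcc a b, D t - D a = ∫ r in a..t, W r)
    (h : ∀ᵐ t, t ∈ Ioo a b → inner ℝ (D t) (W t) ≤ C * ‖D t‖ ^ 2) :
    ‖D b‖ ^ 2 ≤ Real.exp (2 * C * (b - a)) * ‖D a‖ ^ 2 := by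
  set weight : ℝ → ℝ := fun t ↦ Real.exp (-(2 * C) * (t - a)) with hweight
  have hac : AbsolutelyContinuousOnInterval (fun t ↦ weight t * (‖D t‖ * ‖D t‖)) a b := by
    have hnorm := absolutelyContinuousOnInterval_norm
      (absolutelyContinuousOnInterval_of_sub_eq_integral hW hD)
    have hexp : AbsolutelyContinuousOnInterval weight a b := by
      apply ContDiffOn.absolutelyContinuousOnInterval
      fun_prop
    exact hexp.fun_mul (hnorm.fun_mul hnorm)
  simp only [← sq] at hac
  have hmono := le_of_absolutelyContinuousOnInterval_of_deriv_nonpos hab hac <| by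
    filter_upwards [ae_hasDerivAt_of_sub_eq_integral hW hD, h] with t hder hle ht
    have hexp : HasDerivAt weight (weight t * (-(2 * C) * 1)) t :=
      (((hasDerivAt_id t).sub_const a).const_mul _).exp
    rw [(hexp.fun_mul (hder ht).norm_sq).deriv]
    nlinarith [hle ht, Real.exp_pos (-(2 * C) * (t - a))]
  have hinv : Real.exp (2 * C * (b - a)) * weight b = 1 := by
    rw [hweight, ← Real.exp_add, neg_mul, add_neg_cancel, Real.exp_zero]
  calc ‖D b‖ ^ 2 = Real.exp (2 * C * (b - a)) * (weight b * ‖D b‖ ^ 2) := by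
        rw [← mul_assoc, hinv, one_mul]
    _ ≤ Real.exp (2 * C * (b - a)) * (weight a * ‖D a‖ ^ 2) := by gcongr
    _ = Real.exp (2 * C * (b - a)) * ‖D a‖ ^ 2 := by simp [hweight]

/-! ### Integrals and square integrable functions -/

section IntervalIntegral

variable {a b : ℝ} {g : ℝ → ℝ}

lemma integral_integral_eq_integral_sub_mul (hg : IntervalIntegrable g volume a b) :
    ∫ x in a..b, ∫ y in a..x, g y = ∫ y in a..b, (b - y) * g y := by
  have hlin : AbsolutelyContinuousOnInterval (fun y ↦ b - y) a b := by
    apply ContDiffOn.absolutelyContinuousOnInterval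
    fun_prop
  have hparts := hlin.integral_mul_deriv_eq_deriv_mul
    (hg.absolutelyContinuousOnInterval_intervalIntegral left_mem_uIcc)
  have hderiv : ∫ y in a..b, (b - y) * deriv (fun x ↦ ∫ t in a..x, g t) y
      = ∫ y in a..b, (b - y) * g y := by
    refine intervalIntegral.integral_congr_ae ?_
    filter_upwards [hg.ae_hasDerivAt_integral] with y hy hmem
    rw [(hy (uIoc_subset_uIcc hmem) a left_mem_uIcc).deriv]
  rw [hderiv] at hparts
  simp [hparts]

lemma ae_eq_zero_of_integral_eq_zero (hab : a ≤ b) (hg : IntervalIntegrable g volume a b)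
    (h : ∀ x ∈ Icc a b, ∫ t in a..x, g t = 0) : g =ᵐ[volume.restrict (Icc a b)] 0 := by
  rw [← restrict_Ioo_eq_restrict_Icc]
  refine (ae_restrict_iff' measurableSet_Ioo).2 ?_
  filter_upwards [ae_hasDerivAt_of_sub_eq_integral (D := fun _ ↦ (0 : ℝ)) hg fun t ht ↦ by
    rw [h t (uIcc_of_le hab ▸ ht), sub_zero]] with x hx hmem
  exact (hx hmem).unique (hasDerivAt_const x 0)

end IntervalIntegral

lemma sq_integral_le_integral_sq {α : Type*} [MeasurableSpace α] {μ : Measure α}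
    [IsProbabilityMeasure μ] {f : α → ℝ} (hf : MemLp f 2 μ) :
    (∫ x, f x ∂μ) ^ 2 ≤ ∫ x, f x ^ 2 ∂μ := by
  have h := ProbabilityTheory.variance_nonneg f μ
  rw [ProbabilityTheory.variance_eq_sub hf] at h
  exact sub_nonneg.1 h

section ToL2

variable {α : Type*} [MeasurableSpace α] {μ : Measure α} {f g : α → ℝ}

open Classical in
/-- The class of `f` in the Hilbert space `L²(μ)`, with junk value `0` unless `f` is square
integrable. Being total, it turns families `t ↦ f t` that are square integrable only for almost
every `t` into curves in `L²(μ)`. -/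
def toL2 (μ : Measure α) (f : α → ℝ) : Lp ℝ 2 μ := if h : MemLp f 2 μ then h.toLp f else 0

lemma toL2_eq_toLp (hf : MemLp f 2 μ) : toL2 μ f = hf.toLp f := dif_pos hf

lemma coeFn_toL2 (hf : MemLp f 2 μ) : toL2 μ f =ᵐ[μ] f :=
  toL2_eq_toLp hf ▸ hf.coeFn_toLp

lemma toL2_coeFn (Z : Lp ℝ 2 μ) : toL2 μ Z = Z := by
  rw [toL2_eq_toLp (Lp.memLp Z), Lp.toLp_coeFn]

lemma inner_toL2_toL2 (hf : MemLp f 2 μ) (hg : MemLp g 2 μ) :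
    inner ℝ (toL2 μ f) (toL2 μ g) = ∫ x, f x * g x ∂μ := by
  rw [L2.inner_def]
  refine integral_congr_ae ?_
  filter_upwards [coeFn_toL2 hf, coeFn_toL2 hg] with x hfx hgx
  rw [hfx, hgx, real_inner_eq_re_inner ℝ]
  simp [mul_comm]

lemma norm_sq_toL2 (hf : MemLp f 2 μ) : ‖toL2 μ f‖ ^ 2 = ∫ x, f x ^ 2 ∂μ := by
  rw [← real_inner_self_eq_norm_sq, inner_toL2_toL2 hf hf]
  simp_rw [sq]

lemma toL2_sub (hf : MemLp f 2 μ) (hg : MemLp g 2 μ) :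
    toL2 μ (fun x ↦ f x - g x) = toL2 μ f - toL2 μ g := by
  rw [toL2_eq_toLp hf, toL2_eq_toLp hg, ← MemLp.toLp_sub, ← toL2_eq_toLp]
  rfl

lemma toL2_div (hf : MemLp f 2 μ) (c : ℝ) :
    toL2 μ (fun x ↦ f x / c) = c⁻¹ • toL2 μ f := by
  rw [toL2_eq_toLp hf, ← MemLp.toLp_const_smul, ← toL2_eq_toLp]
  congr 1 with x
  exact div_eq_inv_mul _ _

end ToL2

/-! ### The space `H` and the Green function of the second derivative -/

/-- Lebesgue measure on the unit interval, a probability measure; `‖u‖_H` is the norm of `u''`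
in `L²(unitVolume)`. -/
abbrev unitVolume : Measure ℝ := volume.restrict (Icc 0 1)

instance isProbabilityMeasure_unitVolume : IsProbabilityMeasure unitVolume :=
  ⟨by simp⟩

lemma intervalIntegral_eq_integral_unitVolume (f : ℝ → ℝ) :
    ∫ x in (0 : ℝ)..1, f x = ∫ x, f x ∂unitVolume := by
  rw [intervalIntegral.integral_of_le zero_le_one, integral_Icc_eq_integral_Ioc]

lemma one_sub_mem_Icc_zero_one {x : ℝ} (hx : x ∈ Icc (0 : ℝ) 1) : 1 - x ∈ Icc (0 : ℝ) 1 :=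
  ⟨sub_nonneg.2 hx.2, sub_le_self 1 hx.1⟩

lemma measurePreserving_one_sub_unitVolume :
    MeasurePreserving (fun x : ℝ ↦ 1 - x) unitVolume unitVolume := by
  have h := (Measure.measurePreserving_sub_left (volume : Measure ℝ) 1).restrict_preimage
    (s := Icc (0 : ℝ) 1) measurableSet_Icc
  simpa using h

lemma norm_toL2_eq_Hnorm {f : ℝ → ℝ} (hf : MemLp f 2 unitVolume) :
    ‖toL2 unitVolume f‖ = Hnorm f := by
  rw [Hnorm, intervalIntegral_eq_integral_unitVolume, ← norm_sq_toL2 hf,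
    Real.sqrt_sq (norm_nonneg _)]

lemma inner_toL2_eq_Hip {f g : ℝ → ℝ} (hf : MemLp f 2 unitVolume) (hg : MemLp g 2 unitVolume) :
    inner ℝ (toL2 unitVolume f) (toL2 unitVolume g) = Hip f g := by
  rw [Hip, intervalIntegral_eq_integral_unitVolume, inner_toL2_toL2 hf hg]

namespace MemH

variable {f f1 f2 g g1 g2 : ℝ → ℝ} {x y : ℝ}

lemma hasDerivWithinAt (h : MemH f f1 f2) (hx : x ∈ Icc (0 : ℝ) 1) :
    HasDerivWithinAt f (f1 x) (Icc 0 1) x := h.1 x hx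

lemma deriv_eq_add_integral (h : MemH f f1 f2) (hx : x ∈ Icc (0 : ℝ) 1) :
    f1 x = f1 0 + ∫ t in (0 : ℝ)..x, f2 t := h.2.1 x hx

lemma integrable (h : MemH f f1 f2) : Integrable f2 unitVolume := h.2.2.1

lemma apply_zero (h : MemH f f1 f2) : f 0 = 0 := h.2.2.2.2.1

lemma apply_one (h : MemH f f1 f2) : f 1 = 0 := h.2.2.2.2.2

lemma memLp (h : MemH f f1 f2) : MemLp f2 2 unitVolume :=
  (memLp_two_iff_integrable_sq h.integrable.aestronglyMeasurable).2 h.2.2.2.1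

lemma intervalIntegrable (h : MemH f f1 f2) (hx : x ∈ Icc (0 : ℝ) 1) (hy : y ∈ Icc (0 : ℝ) 1) :
    IntervalIntegrable f2 volume x y :=
  IntegrableOn.intervalIntegrable (h.integrable.mono_measure
    (Measure.restrict_mono (uIcc_subset_Icc hx hy) le_rfl))

lemma hasDerivAt (h : MemH f f1 f2) (hx : x ∈ Ioo (0 : ℝ) 1) : HasDerivAt f (f1 x) x :=
  (h.hasDerivWithinAt (Ioo_subset_Icc_self hx)).hasDerivAt (Icc_mem_nhds hx.1 hx.2)

lemma continuousOn (h : MemH f f1 f2) : ContinuousOn f (Icc 0 1) :=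
  fun _ hx ↦ (h.hasDerivWithinAt hx).continuousWithinAt

lemma continuousOn_deriv (h : MemH f f1 f2) : ContinuousOn f1 (Icc 0 1) := by
  have hprim := (h.intervalIntegrable unitInterval.zero_mem
    unitInterval.one_mem).absolutelyContinuousOnInterval_intervalIntegral left_mem_uIcc
  rw [← uIcc_of_le zero_le_one]
  refine ((continuousOn_const (c := f1 0)).add hprim.continuousOn).congr fun y hy ↦ ?_
  exact h.deriv_eq_add_integral (uIcc_of_le (zero_le_one' ℝ) ▸ hy)

lemma eq_integral_deriv (h : MemH f f1 f2) (hx : x ∈ Icc (0 : ℝ) 1) :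
    f x = ∫ y in (0 : ℝ)..x, f1 y := by
  have hsub : Icc 0 x ⊆ Icc (0 : ℝ) 1 := Icc_subset_Icc_right hx.2
  rw [intervalIntegral.integral_eq_sub_of_hasDerivAt_of_le hx.1 (h.continuousOn.mono hsub)
    (fun y hy ↦ h.hasDerivAt ⟨hy.1, hy.2.trans_le hx.2⟩)
    ((h.continuousOn_deriv.mono hsub).intervalIntegrable_of_Icc hx.1), h.apply_zero, sub_zero]

lemma sub (hf : MemH f f1 f2) (hg : MemH g g1 g2) :
    MemH (fun x ↦ f x - g x) (fun x ↦ f1 x - g1 x) (fun x ↦ f2 x - g2 x) := by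
  refine ⟨fun x hx ↦ (hf.hasDerivWithinAt hx).sub (hg.hasDerivWithinAt hx), fun x hx ↦ ?_,
    hf.integrable.sub hg.integrable, (hf.memLp.sub hg.memLp).integrable_sq,
    by simp [hf.apply_zero, hg.apply_zero], by simp [hf.apply_one, hg.apply_one]⟩
  rw [intervalIntegral.integral_sub (hf.intervalIntegrable unitInterval.zero_mem hx)
      (hg.intervalIntegrable unitInterval.zero_mem hx)]
  beta_reduce
  rw [hf.deriv_eq_add_integral hx,
    hg.deriv_eq_add_integral hx, add_sub_add_comm]

lemma reflect (h : MemH f f1 f2) :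
    MemH (fun x ↦ f (1 - x)) (fun x ↦ -f1 (1 - x)) (fun x ↦ f2 (1 - x)) := by
  refine ⟨fun x hx ↦ ?_, fun x hx ↦ ?_,
    measurePreserving_one_sub_unitVolume.integrable_comp_of_integrable h.integrable,
    measurePreserving_one_sub_unitVolume.integrable_comp_of_integrable h.memLp.integrable_sq,
    by simpa using h.apply_one, by simpa using h.apply_zero⟩
  · exact ((h.hasDerivWithinAt (one_sub_mem_Icc_zero_one hx)).comp x
      ((hasDerivWithinAt_id x _).const_sub 1)
      fun _ ↦ one_sub_mem_Icc_zero_one).congr_deriv (mul_neg_one _)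
  · have hx' := one_sub_mem_Icc_zero_one hx
    beta_reduce
    rw [intervalIntegral.integral_comp_sub_left f2 1, sub_zero,
      h.deriv_eq_add_integral unitInterval.one_mem, h.deriv_eq_add_integral hx',
      ← intervalIntegral.integral_add_adjacent_intervals
        (h.intervalIntegrable unitInterval.zero_mem hx')
        (h.intervalIntegrable hx' unitInterval.one_mem)]
    ring

lemma abs_deriv_le_Hnorm (h : MemH f f1 f2) (hx : x ∈ Icc (0 : ℝ) 1) : |f1 x| ≤ Hnorm f2 := by
  obtain ⟨c, hc, hc0⟩ := exists_hasDerivAt_eq_zero zero_lt_one h.continuousOn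
    (h.apply_zero.trans h.apply_one.symm) fun y hy ↦ h.hasDerivAt hy
  replace hc := Ioo_subset_Icc_self hc
  have hf1 : f1 x = ∫ t in c..x, f2 t := by
    rw [← intervalIntegral.integral_interval_sub_left
      (h.intervalIntegrable unitInterval.zero_mem hx)
      (h.intervalIntegrable unitInterval.zero_mem hc),
      ← sub_eq_iff_eq_add'.2 (h.deriv_eq_add_integral hx),
      ← sub_eq_iff_eq_add'.2 (h.deriv_eq_add_integral hc), hc0]
    ring
  calc |f1 x| ≤ ∫ t in uIoc c x, |f2 t| := by
        simp_rw [hf1, ← Real.norm_eq_abs]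
        exact intervalIntegral.norm_integral_le_integral_norm_uIoc
    _ ≤ ∫ t, |f2 t| ∂unitVolume :=
        setIntegral_mono_set h.integrable.abs (Eventually.of_forall fun _ ↦ abs_nonneg _)
          (uIoc_subset_uIcc.trans (uIcc_subset_Icc hc hx)).eventuallyLE
    _ ≤ Hnorm f2 := by
        rw [Hnorm, intervalIntegral_eq_integral_unitVolume]
        refine Real.le_sqrt_of_sq_le ?_
        simpa using sq_integral_le_integral_sq h.memLp.abs

lemma ae_eq_zero_of_eq_zero (h : MemH f f1 f2) (h0 : ∀ x ∈ Icc (0 : ℝ) 1, f x = 0) :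
    f2 =ᵐ[unitVolume] 0 := by
  have hf1 : ∀ x ∈ Icc (0 : ℝ) 1, f1 x = 0 := fun x hx ↦
    (uniqueDiffOn_Icc_zero_one x hx).eq_deriv _ (h.hasDerivWithinAt hx)
      ((hasDerivWithinAt_const x _ 0).congr h0 (h0 x hx))
  refine ae_eq_zero_of_integral_eq_zero zero_le_one
    (h.intervalIntegrable unitInterval.zero_mem unitInterval.one_mem) fun x hx ↦ ?_
  rw [← sub_eq_iff_eq_add'.2 (h.deriv_eq_add_integral hx), hf1 x hx,
    hf1 0 unitInterval.zero_mem, sub_zero]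

lemma eq_mul_add_integral (h : MemH f f1 f2) (hx : x ∈ Icc (0 : ℝ) 1) :
    f x = x * f1 0 + ∫ y in (0 : ℝ)..x, (x - y) * f2 y := by
  have hint := h.intervalIntegrable unitInterval.zero_mem hx
  rw [← integral_integral_eq_integral_sub_mul hint, h.eq_integral_deriv hx]
  have hsub : uIcc 0 x ⊆ Icc (0 : ℝ) 1 := uIcc_subset_Icc unitInterval.zero_mem hx
  rw [intervalIntegral.integral_congr fun y hy ↦ h.deriv_eq_add_integral (hsub hy),
    intervalIntegral.integral_add intervalIntegrable_const
      (hint.absolutelyContinuousOnInterval_intervalIntegral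
        left_mem_uIcc).continuousOn.intervalIntegrable]
  simp

end MemH

lemma exists_memH {z : ℝ → ℝ} (hz : MemLp z 2 unitVolume) : ∃ f f1, MemH f f1 z := by
  have hint : Integrable z unitVolume := hz.integrable one_le_two
  have hii : IntervalIntegrable z volume 0 1 :=
    (intervalIntegrable_iff_integrableOn_Icc_of_le zero_le_one).2 hint
  have hprim := (hii.absolutelyContinuousOnInterval_intervalIntegral left_mem_uIcc).continuousOn
  rw [uIcc_of_le zero_le_one] at hprim
  -- The constant makes the second primitive vanish at `1`.
  set c : ℝ := -∫ y in (0 : ℝ)..1, (1 - y) * z y with hc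
  set f1 : ℝ → ℝ := fun x ↦ c + ∫ t in (0 : ℝ)..x, z t with hf1
  have hf1_cont : ContinuousOn f1 (Icc 0 1) := continuousOn_const.add hprim
  refine ⟨fun x ↦ ∫ t in (0 : ℝ)..x, f1 t, f1, fun x hx ↦ ?_, fun x _ ↦ by simp [hf1],
    hint, hz.integrable_sq, intervalIntegral.integral_same, ?_⟩
  · have : Fact (x ∈ Icc (0 : ℝ) 1) := ⟨hx⟩
    exact intervalIntegral.integral_hasDerivWithinAt_right
      ((hf1_cont.mono (Icc_subset_Icc_right hx.2)).intervalIntegrable_of_Icc hx.1)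
      (hf1_cont.stronglyMeasurableAtFilter_nhdsWithin measurableSet_Icc x) (hf1_cont x hx)
  · simp only [hf1]
    rw [intervalIntegral.integral_add intervalIntegrable_const
      (hprim.intervalIntegrable_of_Icc zero_le_one), integral_integral_eq_integral_sub_mul hii, hc]
    simp

/-- The Green function of `u ↦ u''` on `[0, 1]` with zero boundary values. -/
def greenKernel (x y : ℝ) : ℝ := max (x - y) 0 - x * (1 - y)

lemma continuous_greenKernel (x : ℝ) : Continuous (greenKernel x) := by
  unfold greenKernel
  fun_prop

lemma memLp_greenKernel (x : ℝ) : MemLp (greenKernel x) 2 unitVolume :=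
  (memLp_two_iff_integrable_sq (continuous_greenKernel x).aestronglyMeasurable).2
    ((continuous_greenKernel x).pow 2).continuousOn.integrableOn_Icc

lemma integral_max_sub_mul {z : ℝ → ℝ} {x : ℝ} (hz : IntervalIntegrable z volume 0 1)
    (hx : x ∈ Icc (0 : ℝ) 1) :
    ∫ y in (0 : ℝ)..1, max (x - y) 0 * z y = ∫ y in (0 : ℝ)..x, (x - y) * z y := by
  have hint : IntervalIntegrable (fun y ↦ max (x - y) 0 * z y) volume 0 1 :=
    hz.continuousOn_mul (by fun_prop)
  have hx' : x ∈ uIcc (0 : ℝ) 1 := Icc_subset_uIcc hx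
  have hright : ∫ y in x..1, max (x - y) 0 * z y = 0 := by
    refine intervalIntegral.integral_zero_ae (Eventually.of_forall fun y hy ↦ ?_)
    rw [uIoc_of_le hx.2] at hy
    rw [max_eq_right (sub_nonpos.2 hy.1.le), zero_mul]
  rw [← intervalIntegral.integral_add_adjacent_intervals
    (hint.mono_set (uIcc_subset_uIcc_left hx')) (hint.mono_set (uIcc_subset_uIcc_right hx')),
    hright, add_zero]
  refine intervalIntegral.integral_congr fun y hy ↦ ?_
  rw [uIcc_of_le hx.1] at hy
  simp only [max_eq_left (sub_nonneg.2 hy.2)]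

lemma MemH.eq_integral_greenKernel {f f1 f2 : ℝ → ℝ} {x : ℝ} (h : MemH f f1 f2)
    (hx : x ∈ Icc (0 : ℝ) 1) : f x = ∫ y, greenKernel x y * f2 y ∂unitVolume := by
  have hint := h.intervalIntegrable unitInterval.zero_mem unitInterval.one_mem
  have hf := h.eq_mul_add_integral hx
  have hbdry := h.eq_mul_add_integral unitInterval.one_mem
  rw [h.apply_one] at hbdry
  simp_rw [greenKernel, sub_mul (max _ _), mul_assoc]
  rw [← intervalIntegral_eq_integral_unitVolume,
    intervalIntegral.integral_sub (hint.continuousOn_mul (by fun_prop))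
      ((hint.continuousOn_mul (by fun_prop)).const_mul x),
    intervalIntegral.integral_const_mul, integral_max_sub_mul hint hx]
  linear_combination hf - x * hbdry

lemma MemH.eq_inner_toL2_greenKernel {f f1 f2 : ℝ → ℝ} {x : ℝ} (h : MemH f f1 f2)
    (hx : x ∈ Icc (0 : ℝ) 1) :
    f x = inner ℝ (toL2 unitVolume (greenKernel x)) (toL2 unitVolume f2) := by
  rw [inner_toL2_toL2 (memLp_greenKernel x) h.memLp, h.eq_integral_greenKernel hx]

lemma eq_of_inner_toL2_greenKernel_eq {Y Z : Lp ℝ 2 unitVolume}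
    (h : ∀ x ∈ Icc (0 : ℝ) 1, inner ℝ (toL2 unitVolume (greenKernel x)) Y
      = inner ℝ (toL2 unitVolume (greenKernel x)) Z) : Y = Z := by
  obtain ⟨f, f1, hf⟩ := exists_memH (Lp.memLp (Y - Z))
  rw [← sub_eq_zero, Lp.eq_zero_iff_ae_eq_zero]
  refine hf.ae_eq_zero_of_eq_zero fun x hx ↦ ?_
  rw [hf.eq_inner_toL2_greenKernel hx, toL2_coeFn, inner_sub_right, h x hx, sub_self]

lemma MemH.toL2_eq_iff_eqOn {f f1 f2 g g1 g2 : ℝ → ℝ} (hf : MemH f f1 f2) (hg : MemH g g1 g2) :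
    toL2 unitVolume f2 = toL2 unitVolume g2 ↔ EqOn f g (Icc 0 1) := by
  refine ⟨fun h x hx ↦ ?_, fun h ↦ eq_of_inner_toL2_greenKernel_eq fun x hx ↦ ?_⟩
  · rw [hf.eq_inner_toL2_greenKernel hx, hg.eq_inner_toL2_greenKernel hx, h]
  · rw [← hf.eq_inner_toL2_greenKernel hx, ← hg.eq_inner_toL2_greenKernel hx, h hx]

/-! ### Semimonotonicity of the energy gradient -/

/-- The weight `(1 + p²)^(-5/2)` of `u''²` in the elastic energy, as a function of `p = u'`. -/
def bendingWeight (p : ℝ) : ℝ := (1 + p ^ 2) ^ (-(5 / 2) : ℝ)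

/-- The weight `p (1 + p²)^(-7/2) = -1/5 · d/dp (1 + p²)^(-5/2)` in the second term of the first
variation of the elastic energy. -/
def slopeWeight (p : ℝ) : ℝ := p * (1 + p ^ 2) ^ (-(7 / 2) : ℝ)

/-- The directional derivative at `(p, A)` in direction `(δ, d)` of the Lagrangian
`A² (1 + p²)^(-5/2)` of the elastic energy, where `p = u'` and `A = u''`. -/
def energyVariation (p A δ d : ℝ) : ℝ :=
  2 * (A * d * bendingWeight p) - 5 * (A ^ 2 * δ * slopeWeight p)

lemma bendingWeight_nonneg (p : ℝ) : 0 ≤ bendingWeight p := by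
  unfold bendingWeight
  positivity

lemma abs_mul_one_add_sq_rpow_le_one {p s c : ℝ} (hs : s ≤ -1) (hc : |c| ≤ 1 + p ^ 2) :
    |c * (1 + p ^ 2) ^ s| ≤ 1 := by
  have hpos : 0 < 1 + p ^ 2 := by positivity
  rw [abs_mul, abs_of_nonneg (Real.rpow_nonneg hpos.le s)]
  calc |c| * (1 + p ^ 2) ^ s ≤ (1 + p ^ 2) * (1 + p ^ 2) ^ (-1 : ℝ) := by
        gcongr
        linarith [sq_nonneg p]
    _ = 1 := by rw [Real.rpow_neg_one, mul_inv_cancel₀ hpos.ne']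

lemma abs_slopeWeight_le_one (p : ℝ) : |slopeWeight p| ≤ 1 :=
  abs_mul_one_add_sq_rpow_le_one (by norm_num)
    (abs_le.2 ⟨by nlinarith [sq_nonneg (p + 1)], by nlinarith [sq_nonneg (p - 1)]⟩)

lemma hasDerivAt_one_add_sq_rpow (s p : ℝ) :
    HasDerivAt (fun p : ℝ ↦ (1 + p ^ 2) ^ s) (2 * s * (p * (1 + p ^ 2) ^ (s - 1))) p := by
  have hbase : HasDerivAt (fun p : ℝ ↦ 1 + p ^ 2) (2 * p) p := by
    simpa using (hasDerivAt_pow 2 p).const_add 1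
  exact (hbase.rpow_const (Or.inl (by positivity))).congr_deriv (by ring)

lemma hasDerivAt_bendingWeight (p : ℝ) : HasDerivAt bendingWeight (-5 * slopeWeight p) p :=
  (hasDerivAt_one_add_sq_rpow (-(5 / 2)) p).congr_deriv <| by
    rw [slopeWeight]
    norm_num

lemma hasDerivAt_slopeWeight (p : ℝ) : HasDerivAt slopeWeight
    (1 * (1 + p ^ 2) ^ (-(7 / 2) : ℝ) - 7 * (p ^ 2 * (1 + p ^ 2) ^ (-(9 / 2) : ℝ))) p :=
  ((hasDerivAt_id p).mul (hasDerivAt_one_add_sq_rpow (-(7 / 2)) p)).congr_deriv <| by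
    norm_num
    ring

lemma abs_sub_le_of_abs_deriv_le {f f' : ℝ → ℝ} {C : ℝ} (hf : ∀ p, HasDerivAt f (f' p) p)
    (hC : ∀ p, |f' p| ≤ C) (p q : ℝ) : |f p - f q| ≤ C * |p - q| :=
  convex_univ.norm_image_sub_le_of_norm_hasDerivWithin_le (fun x _ ↦ (hf x).hasDerivWithinAt)
    (fun x _ ↦ hC x) (mem_univ q) (mem_univ p)

lemma abs_bendingWeight_sub_le (p q : ℝ) :
    |bendingWeight p - bendingWeight q| ≤ 5 * |p - q| := by
  refine abs_sub_le_of_abs_deriv_le hasDerivAt_bendingWeight (fun p ↦ ?_) p q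
  rw [abs_mul, abs_neg, abs_of_pos (by norm_num : (0 : ℝ) < 5)]
  linarith [abs_slopeWeight_le_one p]

lemma abs_slopeWeight_sub_le (p q : ℝ) :
    |slopeWeight p - slopeWeight q| ≤ 8 * |p - q| := by
  refine abs_sub_le_of_abs_deriv_le hasDerivAt_slopeWeight (fun p ↦ ?_) p q
  have h7 : |1 * (1 + p ^ 2) ^ (-(7 / 2) : ℝ)| ≤ 1 :=
    abs_mul_one_add_sq_rpow_le_one (by norm_num) (by rw [abs_one]; linarith [sq_nonneg p])
  have h9 : |p ^ 2 * (1 + p ^ 2) ^ (-(9 / 2) : ℝ)| ≤ 1 :=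
    abs_mul_one_add_sq_rpow_le_one (by norm_num) (by rw [abs_sq]; linarith)
  rw [abs_le] at h7 h9 ⊢
  constructor <;> linarith

lemma continuous_bendingWeight : Continuous bendingWeight :=
  continuous_iff_continuousAt.2 fun p ↦ (hasDerivAt_bendingWeight p).continuousAt

lemma continuous_slopeWeight : Continuous slopeWeight :=
  continuous_iff_continuousAt.2 fun p ↦ (hasDerivAt_slopeWeight p).continuousAt

lemma energyVariation_add_eq (p q A B : ℝ) :
    energyVariation p A (q - p) (B - A) + energyVariation q B (p - q) (A - B) =
      -(2 * ((A - B) ^ 2 * bendingWeight p))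
      - 2 * ((A - B) * B * (bendingWeight p - bendingWeight q))
      + 5 * ((p - q) * ((A + B) * (A - B)) * slopeWeight p)
      + 5 * ((p - q) * B ^ 2 * (slopeWeight p - slopeWeight q)) := by
  unfold energyVariation
  ring

lemma energyVariation_add_le {p q S : ℝ} (A B : ℝ) (hS : |p - q| ≤ S) :
    energyVariation p A (q - p) (B - A) + energyVariation q B (p - q) (A - B) ≤
      50 * ((A ^ 2 + B ^ 2) * S ^ 2 + (A - B) ^ 2) := by
  have hS0 : 0 ≤ S := (abs_nonneg _).trans hS
  have hconvex : 0 ≤ (A - B) ^ 2 * bendingWeight p :=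
    mul_nonneg (sq_nonneg _) (bendingWeight_nonneg p)
  have hbending : |(A - B) * B * (bendingWeight p - bendingWeight q)| ≤
      |A - B| * |B| * (5 * S) := by
    rw [abs_mul, abs_mul]
    gcongr
    linarith [abs_bendingWeight_sub_le p q]
  have hslope : |(p - q) * ((A + B) * (A - B)) * slopeWeight p| ≤
      S * ((|A| + |B|) * |A - B|) * 1 := by
    rw [abs_mul, abs_mul, abs_mul]
    gcongr
    exacts [abs_add_le A B, abs_slopeWeight_le_one p]
  have hslope_sub : |(p - q) * B ^ 2 * (slopeWeight p - slopeWeight q)| ≤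
      S * B ^ 2 * (8 * S) := by
    rw [abs_mul, abs_mul, abs_sq]
    gcongr
    linarith [abs_slopeWeight_sub_le p q]
  have young (X : ℝ) : |A - B| * |X| * S ≤ ((A - B) ^ 2 + X ^ 2 * S ^ 2) / 2 := by
    rw [← sq_abs X, ← sq_abs (A - B)]
    nlinarith [sq_nonneg (|A - B| - |X| * S)]
  rw [energyVariation_add_eq]
  have hA : 0 ≤ A ^ 2 * S ^ 2 := by positivity
  have hB : 0 ≤ B ^ 2 * S ^ 2 := by positivity
  linarith [young A, young B, (abs_le.1 hbending).1, (abs_le.1 hslope).2,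
    (abs_le.1 hslope_sub).2, sq_nonneg (A - B)]

section ElDE

variable {f1 f2 φ1 φ2 : ℝ → ℝ}

lemma integrable_bendingTerm (hf1 : ContinuousOn f1 (Icc 0 1)) (hf2 : MemLp f2 2 unitVolume)
    (hφ2 : MemLp φ2 2 unitVolume) :
    Integrable (fun x ↦ f2 x * φ2 x * bendingWeight (f1 x)) unitVolume :=
  IntegrableOn.mul_continuousOn (hf2.integrable_mul hφ2)
    (continuous_bendingWeight.comp_continuousOn hf1) isCompact_Icc

lemma integrable_slopeTerm (hf1 : ContinuousOn f1 (Icc 0 1)) (hf2 : MemLp f2 2 unitVolume)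
    (hφ1 : ContinuousOn φ1 (Icc 0 1)) :
    Integrable (fun x ↦ f2 x ^ 2 * φ1 x * slopeWeight (f1 x)) unitVolume :=
  (IntegrableOn.mul_continuousOn hf2.integrable_sq hφ1 isCompact_Icc).mul_continuousOn
    (continuous_slopeWeight.comp_continuousOn hf1) isCompact_Icc

lemma integrable_energyVariation (hf1 : ContinuousOn f1 (Icc 0 1)) (hf2 : MemLp f2 2 unitVolume)
    (hφ1 : ContinuousOn φ1 (Icc 0 1)) (hφ2 : MemLp φ2 2 unitVolume) :
    Integrable (fun x ↦ energyVariation (f1 x) (f2 x) (φ1 x) (φ2 x)) unitVolume :=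
  ((integrable_bendingTerm hf1 hf2 hφ2).const_mul 2).sub
    ((integrable_slopeTerm hf1 hf2 hφ1).const_mul 5)

lemma elDE_eq_integral_energyVariation (hf1 : ContinuousOn f1 (Icc 0 1))
    (hf2 : MemLp f2 2 unitVolume) (hφ1 : ContinuousOn φ1 (Icc 0 1))
    (hφ2 : MemLp φ2 2 unitVolume) :
    elDE f1 f2 φ1 φ2 = ∫ x, energyVariation (f1 x) (f2 x) (φ1 x) (φ2 x) ∂unitVolume := by
  unfold elDE energyVariation
  rw [intervalIntegral_eq_integral_unitVolume, intervalIntegral_eq_integral_unitVolume,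
    integral_sub ((integrable_bendingTerm hf1 hf2 hφ2).const_mul 2)
      ((integrable_slopeTerm hf1 hf2 hφ1).const_mul 5), integral_const_mul, integral_const_mul]
  congr 3 <;> ext x
  · rw [bendingWeight, Real.rpow_neg (by positivity), div_eq_mul_inv]
  · rw [slopeWeight, Real.rpow_neg (by positivity), div_eq_mul_inv]
    ring

end ElDE

lemma MemH.elDE_add_elDE_le {f f1 f2 g g1 g2 : ℝ → ℝ} (hf : MemH f f1 f2) (hg : MemH g g1 g2) :
    elDE f1 f2 (fun x ↦ g1 x - f1 x) (fun x ↦ g2 x - f2 x)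
      + elDE g1 g2 (fun x ↦ f1 x - g1 x) (fun x ↦ f2 x - g2 x) ≤
    50 * (1 + ‖toL2 unitVolume f2‖ ^ 2 + ‖toL2 unitVolume g2‖ ^ 2)
      * ‖toL2 unitVolume f2 - toL2 unitVolume g2‖ ^ 2 := by
  have hfg := hf.sub hg
  have hgf := hg.sub hf
  have hintf := integrable_energyVariation hf.continuousOn_deriv hf.memLp
    hgf.continuousOn_deriv hgf.memLp
  have hintg := integrable_energyVariation hg.continuousOn_deriv hg.memLp
    hfg.continuousOn_deriv hfg.memLp
  rw [elDE_eq_integral_energyVariation hf.continuousOn_deriv hf.memLp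
      hgf.continuousOn_deriv hgf.memLp,
    elDE_eq_integral_energyVariation hg.continuousOn_deriv hg.memLp
      hfg.continuousOn_deriv hfg.memLp,
    ← integral_add hintf hintg, ← toL2_sub hf.memLp hg.memLp]
  set S := ‖toL2 unitVolume fun x ↦ f2 x - g2 x‖
  have hbound : Integrable (fun x ↦ (f2 x ^ 2 + g2 x ^ 2) * S ^ 2) unitVolume :=
    (hf.memLp.integrable_sq.add hg.memLp.integrable_sq).mul_const _
  calc _ ≤ ∫ x, 50 * ((f2 x ^ 2 + g2 x ^ 2) * S ^ 2 + (f2 x - g2 x) ^ 2) ∂unitVolume := by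
        refine setIntegral_mono_on (hintf.add hintg)
          ((hbound.add hfg.memLp.integrable_sq).const_mul 50) measurableSet_Icc fun x hx ↦ ?_
        exact energyVariation_add_le (f2 x) (g2 x)
          ((hfg.abs_deriv_le_Hnorm hx).trans_eq (norm_toL2_eq_Hnorm hfg.memLp).symm)
    _ = _ := by
        rw [integral_const_mul, integral_add hbound hfg.memLp.integrable_sq, integral_mul_const,
          integral_add hf.memLp.integrable_sq hg.memLp.integrable_sq,
          ← norm_sq_toL2 hf.memLp, ← norm_sq_toL2 hg.memLp, ← norm_sq_toL2 hfg.memLp]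
        ring

/-! ### Uniqueness of obstacle gradient flows -/

namespace IsOGFel

variable {ψ : ℝ → ℝ} {u u1 u2 v v1 v2 w w1 w2 z z1 z2 : ℝ → ℝ → ℝ}
  {u₀ u₀1 u₀2 w₀ w₀1 w₀2 : ℝ → ℝ} {t : ℝ}

lemma memH (hu : IsOGFel ψ u u1 u2 v v1 v2 u₀ u₀1 u₀2) (ht : 0 ≤ t) :
    MemH (u t) (u1 t) (u2 t) :=
  (hu.memC t ht).1

lemma ae_hasDerivAt_toL2 (hu : IsOGFel ψ u u1 u2 v v1 v2 u₀ u₀1 u₀2) :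
    ∀ᵐ t ∂volume.restrict (Ioi 0),
      HasDerivAt (fun t ↦ toL2 unitVolume (u2 t)) (toL2 unitVolume (v2 t)) t := by
  filter_upwards [hu.derivAe, hu.vMemH, ae_restrict_mem measurableSet_Ioi] with t hder hv ht
  rw [hasDerivAt_iff_tendsto_slope_zero, tendsto_iff_norm_sub_tendsto_zero]
  refine hder.congr' ?_
  have hpos : ∀ᶠ h : ℝ in 𝓝[≠] 0, 0 ≤ t + h := nhdsWithin_le_nhds <|
    (eventually_ge_nhds (neg_neg_iff_pos.2 ht)).mono fun h hh ↦ by linarith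
  filter_upwards [hpos] with h hh
  have hdiff := (hu.memH hh).sub (hu.memH (le_of_lt ht))
  have hquot := hdiff.memLp.const_mul h⁻¹
  simp only [← div_eq_inv_mul] at hquot
  have hnorm := norm_toL2_eq_Hnorm (hquot.sub hv.memLp)
  simp only [Pi.sub_def] at hnorm
  rw [← hnorm, toL2_sub hquot hv.memLp, toL2_div hdiff.memLp,
    toL2_sub (hu.memH hh).memLp (hu.memH (le_of_lt ht)).memLp]

lemma integrableOn_toL2 (hu : IsOGFel ψ u u1 u2 v v1 v2 u₀ u₀1 u₀2) (ht : 0 < t) :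
    IntegrableOn (fun r ↦ toL2 unitVolume (v2 r)) (Ioc 0 t) := by
  have hle : volume.restrict (Ioc 0 t) ≤ volume.restrict (Ioi 0) :=
    Measure.restrict_mono Ioc_subset_Ioi_self le_rfl
  have hmeas : AEStronglyMeasurable (fun r ↦ toL2 unitVolume (v2 r))
      (volume.restrict (Ioc 0 t)) := by
    refine (aestronglyMeasurable_deriv (fun r ↦ toL2 unitVolume (u2 r)) _).congr ?_
    filter_upwards [ae_mono hle hu.ae_hasDerivAt_toL2] with r hr using hr.deriv
  refine Integrable.mono' ((integrable_const 1).add (hu.sqInt t ht)) hmeas ?_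
  filter_upwards [ae_mono hle hu.vMemH] with r hr
  rw [Pi.add_apply, intervalIntegral_eq_integral_unitVolume, ← norm_sq_toL2 hr.memLp]
  nlinarith [sq_nonneg (‖toL2 unitVolume (v2 r)‖ - 1)]

lemma intervalIntegrable_toL2 (hu : IsOGFel ψ u u1 u2 v v1 v2 u₀ u₀1 u₀2) (ht : 0 ≤ t) :
    IntervalIntegrable (fun r ↦ toL2 unitVolume (v2 r)) volume 0 t := by
  rcases ht.eq_or_lt with rfl | hpos
  · exact IntervalIntegrable.refl
  · exact (intervalIntegrable_iff_integrableOn_Ioc_of_le ht).2 (hu.integrableOn_toL2 hpos)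

lemma toL2_sub_eq_integral (hu : IsOGFel ψ u u1 u2 v v1 v2 u₀ u₀1 u₀2) (ht : 0 ≤ t) :
    toL2 unitVolume (u2 t) - toL2 unitVolume (u2 0) = ∫ r in 0..t, toL2 unitVolume (v2 r) := by
  have hint := hu.intervalIntegrable_toL2 ht
  refine eq_of_inner_toL2_greenKernel_eq fun x hx ↦ ?_
  have hcomm := (innerSL ℝ (toL2 unitVolume (greenKernel x))).intervalIntegral_comp_comm hint
  simp only [innerSL_apply_apply] at hcomm
  rw [inner_sub_right, ← (hu.memH ht).eq_inner_toL2_greenKernel hx,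
    ← (hu.memH le_rfl).eq_inner_toL2_greenKernel hx, hu.ftc 0 t le_rfl ht x hx, ← hcomm]
  refine intervalIntegral.integral_congr_ae ?_
  filter_upwards [(ae_restrict_iff' measurableSet_Ioi).1 hu.vMemH] with r hr hmem
  rw [uIoc_of_le ht] at hmem
  exact (hr hmem.1).eq_inner_toL2_greenKernel hx

lemma ae_inner_le (hu : IsOGFel ψ u u1 u2 v v1 v2 u₀ u₀1 u₀2)
    (hw : IsOGFel ψ w w1 w2 z z1 z2 w₀ w₀1 w₀2) :
    ∀ᵐ t ∂volume.restrict (Ioi 0),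
      inner ℝ (toL2 unitVolume (u2 t) - toL2 unitVolume (w2 t))
          (toL2 unitVolume (v2 t) - toL2 unitVolume (z2 t)) ≤
        50 * (1 + ‖toL2 unitVolume (u2 t)‖ ^ 2 + ‖toL2 unitVolume (w2 t)‖ ^ 2)
          * ‖toL2 unitVolume (u2 t) - toL2 unitVolume (w2 t)‖ ^ 2 := by
  filter_upwards [hu.fvi, hw.fvi, hu.vMemH, hw.vMemH, ae_restrict_mem measurableSet_Ioi]
    with t hu_fvi hw_fvi hv hz ht
  have huC := hu.memC t (le_of_lt ht)
  have hwC := hw.memC t (le_of_lt ht)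
  have hu_test := hu_fvi _ _ _ hwC
  have hw_test := hw_fvi _ _ _ huC
  rw [← inner_toL2_eq_Hip hv.memLp (hwC.1.sub huC.1).memLp,
    toL2_sub hwC.1.memLp huC.1.memLp] at hu_test
  rw [← inner_toL2_eq_Hip hz.memLp (huC.1.sub hwC.1).memLp,
    toL2_sub huC.1.memLp hwC.1.memLp] at hw_test
  have hinner : inner ℝ (toL2 unitVolume (v2 t)) (toL2 unitVolume (w2 t) - toL2 unitVolume (u2 t))
      = -inner ℝ (toL2 unitVolume (v2 t))
          (toL2 unitVolume (u2 t) - toL2 unitVolume (w2 t)) := by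
    rw [← inner_neg_right, neg_sub]
  rw [real_inner_comm, inner_sub_left]
  linarith [huC.1.elDE_add_elDE_le hwC.1]

lemma exists_norm_toL2_le (hu : IsOGFel ψ u u1 u2 v v1 v2 u₀ u₀1 u₀2) (ht : 0 ≤ t) :
    ∃ M, ∀ r ∈ Icc 0 t, ‖toL2 unitVolume (u2 r)‖ ≤ M := by
  have hac := absolutelyContinuousOnInterval_of_sub_eq_integral (hu.intervalIntegrable_toL2 ht)
    fun r hr ↦ hu.toL2_sub_eq_integral (uIcc_of_le ht ▸ hr).1
  have hcont := hac.continuousOn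
  rw [uIcc_of_le ht] at hcont
  exact isCompact_Icc.exists_bound_of_continuousOn hcont

theorem eqOn_of_eqOn (hu : IsOGFel ψ u u1 u2 v v1 v2 u₀ u₀1 u₀2)
    (hw : IsOGFel ψ w w1 w2 z z1 z2 w₀ w₀1 w₀2) (h₀ : EqOn u₀ w₀ (Icc 0 1)) (ht : 0 ≤ t) :
    EqOn (u t) (w t) (Icc 0 1) := by
  obtain ⟨M, hM⟩ := hu.exists_norm_toL2_le ht
  obtain ⟨N, hN⟩ := hw.exists_norm_toL2_le ht
  have hinit : toL2 unitVolume (u2 0) - toL2 unitVolume (w2 0) = 0 :=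
    sub_eq_zero.2 <| ((hu.memH le_rfl).toL2_eq_iff_eqOn (hw.memH le_rfl)).2 fun x hx ↦ by
      rw [hu.init, hw.init, h₀ hx]
  have hgronwall := norm_sq_le_exp_mul_norm_sq_of_inner_le
    (D := fun r ↦ toL2 unitVolume (u2 r) - toL2 unitVolume (w2 r))
    (W := fun r ↦ toL2 unitVolume (v2 r) - toL2 unitVolume (z2 r))
    (C := 50 * (1 + M ^ 2 + N ^ 2)) ht
    ((hu.intervalIntegrable_toL2 ht).sub (hw.intervalIntegrable_toL2 ht)) ?_ ?_
  · rw [hinit, norm_zero, zero_pow two_ne_zero, mul_zero, sq_nonpos_iff, norm_eq_zero,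
      sub_eq_zero] at hgronwall
    exact ((hu.memH ht).toL2_eq_iff_eqOn (hw.memH ht)).1 hgronwall
  · intro r hr
    have hr0 : 0 ≤ r := (uIcc_of_le ht ▸ hr).1
    rw [intervalIntegral.integral_sub (hu.intervalIntegrable_toL2 hr0)
      (hw.intervalIntegrable_toL2 hr0), ← hu.toL2_sub_eq_integral hr0,
      ← hw.toL2_sub_eq_integral hr0]
    abel
  · filter_upwards [(ae_restrict_iff' measurableSet_Ioi).1 (hu.ae_inner_le hw)] with r hle hr
    refine (hle hr.1).trans ?_
    gcongr
    exacts [hM r (Ioo_subset_Icc_self hr), hN r (Ioo_subset_Icc_self hr)]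

end IsOGFel

/-! ### Reflection -/

lemma Hip_reflect (f g : ℝ → ℝ) : Hip (fun x ↦ f (1 - x)) (fun x ↦ g (1 - x)) = Hip f g := by
  simpa [Hip] using intervalIntegral.integral_comp_sub_left (a := 0) (b := 1) (fun x ↦ f x * g x) 1

lemma Hnorm_reflect (f : ℝ → ℝ) : Hnorm (fun x ↦ f (1 - x)) = Hnorm f := by
  simpa [Hip, Hnorm, sq] using congrArg Real.sqrt (Hip_reflect f f)

lemma elDE_reflect (f1 f2 φ1 φ2 : ℝ → ℝ) :
    elDE (fun x ↦ -f1 (1 - x)) (fun x ↦ f2 (1 - x)) (fun x ↦ -φ1 (1 - x)) (fun x ↦ φ2 (1 - x))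
      = elDE f1 f2 φ1 φ2 := by
  have hbending := intervalIntegral.integral_comp_sub_left (a := 0) (b := 1)
    (fun x ↦ f2 x * φ2 x / (1 + f1 x ^ 2) ^ (5 / 2 : ℝ)) 1
  have hslope := intervalIntegral.integral_comp_sub_left (a := 0) (b := 1)
    (fun x ↦ f2 x ^ 2 * f1 x * φ1 x / (1 + f1 x ^ 2) ^ (7 / 2 : ℝ)) 1
  simp only [sub_self, sub_zero] at hbending hslope
  simp only [elDE, neg_sq, mul_neg, neg_mul, neg_neg, hbending, hslope]

lemma MemC.reflect {ψ f f1 f2 : ℝ → ℝ} (h : MemC ψ f f1 f2) :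
    MemC (fun x ↦ ψ (1 - x)) (fun x ↦ f (1 - x)) (fun x ↦ -f1 (1 - x)) (fun x ↦ f2 (1 - x)) :=
  ⟨h.1.reflect, measurePreserving_one_sub_unitVolume.quasiMeasurePreserving.ae h.2⟩

lemma memC_congr_obstacle {ψ φ f f1 f2 : ℝ → ℝ} (hψ : ψ =ᵐ[unitVolume] φ) :
    MemC ψ f f1 f2 ↔ MemC φ f f1 f2 :=
  and_congr_right fun _ ↦ eventually_congr <| hψ.mono fun x hx ↦ by rw [hx]

namespace IsOGFel

variable {ψ φ : ℝ → ℝ} {u u1 u2 v v1 v2 : ℝ → ℝ → ℝ} {u₀ u₀1 u₀2 : ℝ → ℝ}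

theorem reflect (hu : IsOGFel ψ u u1 u2 v v1 v2 u₀ u₀1 u₀2) :
    IsOGFel (fun x ↦ ψ (1 - x))
      (fun t x ↦ u t (1 - x)) (fun t x ↦ -u1 t (1 - x)) (fun t x ↦ u2 t (1 - x))
      (fun t x ↦ v t (1 - x)) (fun t x ↦ -v1 t (1 - x)) (fun t x ↦ v2 t (1 - x))
      (fun x ↦ u₀ (1 - x)) (fun x ↦ -u₀1 (1 - x)) (fun x ↦ u₀2 (1 - x)) where
  init x := hu.init (1 - x)
  init1 x hx := congrArg Neg.neg (hu.init1 _ (one_sub_mem_Icc_zero_one hx))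
  init2 x hx := hu.init2 _ (one_sub_mem_Icc_zero_one hx)
  memC t ht := (hu.memC t ht).reflect
  vMemH := hu.vMemH.mono fun _ h ↦ h.reflect
  derivAe := hu.derivAe.mono fun t h ↦ h.congr fun r ↦
    (Hnorm_reflect fun x ↦ (u2 (t + r) x - u2 t x) / r - v2 t x).symm
  ftc s t hs hst x hx := hu.ftc s t hs hst _ (one_sub_mem_Icc_zero_one hx)
  sqInt T hT := by
    simpa [sq, Hip] using (hu.sqInt T hT).congr_fun
      (fun t _ ↦ by simpa [sq, Hip] using (Hip_reflect (v2 t) (v2 t)).symm) measurableSet_Ioc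
  fvi := by
    filter_upwards [hu.fvi] with t h w w1 w2 hw
    have hw' := hw.reflect
    simp only [sub_sub_cancel] at hw'
    have htest := h _ _ _ hw'
    rw [← Hip_reflect, ← elDE_reflect] at htest
    simpa only [sub_sub_cancel, neg_sub', neg_neg] using htest

theorem congr_obstacle (hψ : ψ =ᵐ[unitVolume] φ) (hu : IsOGFel ψ u u1 u2 v v1 v2 u₀ u₀1 u₀2) :
    IsOGFel φ u u1 u2 v v1 v2 u₀ u₀1 u₀2 where
  __ := hu
  memC t ht := (memC_congr_obstacle hψ).1 (hu.memC t ht)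
  fvi := hu.fvi.mono fun _ h w w1 w2 hw ↦ h w w1 w2 ((memC_congr_obstacle hψ).2 hw)

end IsOGFel

theorem elastic_flow_symmetry_preservation_general {ψ u₀ u₀1 u₀2 : ℝ → ℝ}
    {u u1 u2 v v1 v2 : ℝ → ℝ → ℝ} {t x : ℝ} (hψ : ψ =ᵐ[unitVolume] fun x ↦ ψ (1 - x))
    (hu₀ : ∀ x ∈ Ioo (0 : ℝ) 1, u₀ x = u₀ (1 - x))
    (hu : IsOGFel ψ u u1 u2 v v1 v2 u₀ u₀1 u₀2) (ht : 0 ≤ t) (hx : x ∈ Icc (0 : ℝ) 1) :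
    u t (1 - x) = u t x := by
  have hu_reflect := hu.reflect.congr_obstacle hψ.symm
  refine (hu.eqOn_of_eqOn hu_reflect (fun y hy ↦ ?_) ht hx).symm
  have h0 : u₀ 0 = 0 := hu.init 0 ▸ (hu.memH le_rfl).apply_zero
  have h1 : u₀ 1 = 0 := hu.init 1 ▸ (hu.memH le_rfl).apply_one
  rcases eq_endpoints_or_mem_Ioo_of_mem_Icc hy with rfl | rfl | hy
  · simp [h0, h1]
  · simp [h0, h1]
  · exact hu₀ y hy

/-- **Symmetry preservation.** If the obstacle `ψ` is symmetric (`ψ(x) = ψ(1-x)`) and the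
initial datum `u₀ ∈ W^{3,∞}(0,1) ∩ H` with `u₀''(0) = u₀''(1) = 0` is symmetric, then the
Obstacle Gradient Flow for the elastic energy starting at `u₀` satisfies
`u(t)(1-x) = u(t)(x)` for all `t ≥ 0` and `x ∈ (0,1)`. -/
theorem elastic_flow_symmetry_preservation
    (ψ : ℝ → ℝ) (hψcont : ContinuousOn ψ (Icc 0 1)) (hψ0 : ψ 0 < 0) (hψ1 : ψ 1 < 0)
    (hψsym : ∀ x ∈ Ioo (0:ℝ) 1, ψ x = ψ (1 - x))
    (u₀ u₀1 u₀2 u₀3 : ℝ → ℝ)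
    (hu₀C : MemC ψ u₀ u₀1 u₀2)
    (hu₀W3 : ∀ x ∈ Icc (0:ℝ) 1, u₀2 x = u₀2 0 + ∫ y in (0:ℝ)..x, u₀3 y)
    (hu₀W3inf : ∃ M : ℝ, ∀ x ∈ Icc (0:ℝ) 1, |u₀3 x| ≤ M)
    (hNav0 : u₀2 0 = 0) (hNav1 : u₀2 1 = 0)
    (hu₀sym : ∀ x ∈ Ioo (0:ℝ) 1, u₀ x = u₀ (1 - x))
    (u u1 u2 v v1 v2 : ℝ → ℝ → ℝ)
    (hflow : IsOGFel ψ u u1 u2 v v1 v2 u₀ u₀1 u₀2) :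
    ∀ t : ℝ, 0 ≤ t → ∀ x ∈ Ioo (0:ℝ) 1, u t (1 - x) = u t x := by
  have hψ : ψ =ᵐ[unitVolume] fun x ↦ ψ (1 - x) := by
    rw [unitVolume, ← restrict_Ioo_eq_restrict_Icc]
    exact ae_restrict_of_forall_mem measurableSet_Ioo hψsym
  exact fun t ht x hx ↦ elastic_flow_symmetry_preservation_general hψ hu₀sym hflow ht
    (Ioo_subset_Icc_self hx)
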